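/- For each n ∈ ℕ there is a unique q_n ∈ (0,1) such that Σ_{k ∈ ℕ^r} a_r(k)·q_n^{a_r(k)}/(1 − q_n^{a_r(k)}) = n, and q_n equivalently maximizes q ↦ q^n · ∏_{k ∈ ℕ^r} (1 − q^{a_r(k)}) over q ∈ (0,1). -/

import Mathlib

open Finset

/-- `h_r(y) = ∏_{1 ≤ ℓ ≤ j ≤ r} (y_ℓ + ⋯ + y_j)`. -/
noncomputable def hpoly (r : ℕ) (y : Fin r → ℝ) : ℝ :=
  ∏ p ∈ Finset.univ.filter (fun p : Fin r × Fin r => p.1 ≤ p.2),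
    ∑ i ∈ Finset.Icc p.1 p.2, y i

/-- `c_r = r!(r-1)!⋯1!`. -/
def crconst (r : ℕ) : ℕ := ∏ i ∈ Finset.range r, Nat.factorial (i + 1)

/-- The Weyl dimension polynomial `a_r(k) = h_r(k)/c_r`. -/
noncomputable def apoly (r : ℕ) (y : Fin r → ℝ) : ℝ := hpoly r y / crconst r

/-- The dimension `a_r(k)` of the irreducible representation indexed by a positive
integer vector `k`. -/
noncomputable def adim (r : ℕ) (k : {k : Fin r → ℕ // ∀ i, 0 < k i}) : ℝ :=
  apoly r (fun i => (k.1 i : ℝ))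

section helpers17

variable {ι : Type*} (a : ι → ℝ) (δ : ℝ)

lemma T_mono {a p q : ℝ} (ha : 0 < a) (hp : 0 < p) (hpq : p < q) (hq : q < 1) :
    a * p ^ a / (1 - p ^ a) < a * q ^ a / (1 - q ^ a) := by
  have h1 : p ^ a < q ^ a := Real.rpow_lt_rpow hp.le hpq ha
  have h2 : q ^ a < 1 := Real.rpow_lt_one (hp.trans hpq).le hq ha
  have h3 : 0 < p ^ a := Real.rpow_pos_of_pos hp a
  rw [div_lt_div_iff₀ (by linarith) (by linarith)]
  nlinarith [mul_pos ha (sub_pos.2 h1)]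

lemma T_nonneg {a p : ℝ} (ha : 0 < a) (hp : 0 < p) (hq : p < 1) :
    0 < a * p ^ a / (1 - p ^ a) := by
  have h2 : p ^ a < 1 := Real.rpow_lt_one hp.le hq ha
  have h3 : 0 < p ^ a := Real.rpow_pos_of_pos hp a
  exact div_pos (mul_pos ha h3) (by linarith)

lemma T_summable (hδ : 0 < δ) (ha : ∀ i, δ ≤ a i)
    (hs : ∀ q : ℝ, 0 < q → q < 1 → Summable fun i => q ^ a i) {q : ℝ} (h0 : 0 < q) (h1 : q < 1) :
    Summable fun i => a i * q ^ a i / (1 - q ^ a i) := by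
  set s := Real.sqrt q with hsd
  have hs0 : 0 < s := Real.sqrt_pos.2 h0
  have hs1 : s < 1 := by rw [hsd, Real.sqrt_lt' one_pos]; simpa using h1
  have hqs : q = s * s := (Real.mul_self_sqrt h0.le).symm
  have hl : 0 < - Real.log s := by have := Real.log_neg hs0 hs1; linarith
  have hd : q ^ δ < 1 := Real.rpow_lt_one h0.le h1 hδ
  refine Summable.of_nonneg_of_le (fun i => (T_nonneg (hδ.trans_le (ha i)) h0 h1).le) (fun i => ?_)
    ((hs s hs0 hs1).mul_left (Real.exp (-1) / (- Real.log s) / (1 - q ^ δ)))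
  have hq1 : q ^ a i ≤ q ^ δ := Real.rpow_le_rpow_of_exponent_ge h0 h1.le (ha i)
  have hsa : 0 < s ^ a i := Real.rpow_pos_of_pos hs0 _
  have key : a i * s ^ a i ≤ Real.exp (-1) / (- Real.log s) := by
    rw [le_div_iff₀ hl, Real.rpow_def_of_pos hs0]
    have := Real.mul_exp_neg_le_exp_neg_one (- Real.log s * a i)
    rw [show -(-Real.log s * a i) = Real.log s * a i by ring] at this
    linarith
  have e1 : a i * q ^ a i ≤ Real.exp (-1) / (- Real.log s) * s ^ a i := by
    rw [hqs, Real.mul_rpow hs0.le hs0.le, ← mul_assoc]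
    exact mul_le_mul_of_nonneg_right key hsa.le
  have hpos : 0 ≤ Real.exp (-1) / (- Real.log s) * s ^ a i := by positivity
  calc a i * q ^ a i / (1 - q ^ a i)
      ≤ Real.exp (-1) / (- Real.log s) * s ^ a i / (1 - q ^ δ) :=
        div_le_div₀ hpos e1 (by linarith) (by linarith)
    _ = _ := by ring

lemma T_tangent {a p q : ℝ} (ha : 0 < a) (hp : 0 < p) (hp1 : p < 1) (hq : 0 < q) (hq1 : q < 1) :
    1 - p ^ a ≤ (1 - q ^ a) * Real.exp ((a * q ^ a / (1 - q ^ a)) * Real.log (q / p)) := by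
  have hx : 0 < p ^ a := Real.rpow_pos_of_pos hp a
  have hy : 0 < q ^ a := Real.rpow_pos_of_pos hq a
  have hx1 : p ^ a < 1 := Real.rpow_lt_one hp.le hp1 ha
  have hy1 : q ^ a < 1 := Real.rpow_lt_one hq.le hq1 ha
  have hl : a * Real.log (q / p) = - Real.log (p ^ a / q ^ a) := by
    rw [Real.log_div hq.ne' hp.ne', Real.log_div hx.ne' hy.ne', Real.log_rpow hp, Real.log_rpow hq]
    ring
  set x := p ^ a
  set y := q ^ a
  have h1y : 0 < 1 - y := by linarith
  have h2 : Real.log (x / y) ≤ x / y - 1 := Real.log_le_sub_one_of_pos (div_pos hx hy)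
  have h3 : (y - x) / (1 - y) ≤ (a * y / (1 - y)) * Real.log (q / p) := by
    rw [show (a * y / (1 - y)) * Real.log (q / p) = (y * (a * Real.log (q / p))) / (1 - y) by ring, hl]
    apply div_le_div_of_nonneg_right _ h1y.le
    have := mul_le_mul_of_nonneg_left h2 hy.le
    have e : y * (x / y - 1) = x - y := by field_simp
    linarith
  have h4 : (1 - x) / (1 - y) ≤ Real.exp ((y - x) / (1 - y)) := by
    have := Real.add_one_le_exp ((y - x) / (1 - y))
    have e : (y - x) / (1 - y) + 1 = (1 - x) / (1 - y) := by field_simp; ring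
    linarith
  have h5 := h4.trans (Real.exp_le_exp.2 h3)
  rw [div_le_iff₀ h1y] at h5
  linarith

lemma abs_exists [Nonempty ι] (hδ : 0 < δ) (ha : ∀ i, δ ≤ a i)
    (hs : ∀ q : ℝ, 0 < q → q < 1 → Summable fun i => q ^ a i) (n : ℕ) (hn : 1 ≤ n) :
    ∃! q : ℝ, q ∈ Set.Ioo (0 : ℝ) 1 ∧ (∑' i, a i * q ^ a i / (1 - q ^ a i)) = n := by
  have hap : ∀ i, 0 < a i := fun i => hδ.trans_le (ha i)
  have hn' : (0 : ℝ) < n := by exact_mod_cast hn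
  have hT := fun {q : ℝ} => T_summable a δ hδ ha hs (q := q)
  let i0 : ι := Classical.arbitrary ι
  have hmono : ∀ p q : ℝ, 0 < p → p < q → q < 1 →
      (∑' i, a i * p ^ a i / (1 - p ^ a i)) < ∑' i, a i * q ^ a i / (1 - q ^ a i) := by
    intro p q hp hpq hq
    exact Summable.tsum_lt_tsum (i := i0) (fun i => (T_mono (hap i) hp hpq hq).le)
      (T_mono (hap i0) hp hpq hq) (hT hp (hpq.trans hq)) (hT (hp.trans hpq) hq)
  -- upper point
  obtain ⟨b, hb0, hb1, hb⟩ : ∃ b : ℝ, 0 < b ∧ b < 1 ∧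
      (n : ℝ) ≤ ∑' i, a i * b ^ a i / (1 - b ^ a i) := by
    have hA := hap i0
    have hx : 0 < (n : ℝ) / (n + a i0) := by positivity
    have hx1 : (n : ℝ) / (n + a i0) < 1 := by rw [div_lt_one (by positivity)]; linarith
    have hb0 : 0 < ((n : ℝ) / (n + a i0)) ^ (1 / a i0) := Real.rpow_pos_of_pos hx _
    have hb1 : ((n : ℝ) / (n + a i0)) ^ (1 / a i0) < 1 :=
      Real.rpow_lt_one hx.le hx1 (by positivity)
    refine ⟨_, hb0, hb1, ?_⟩
    refine le_trans (le_of_eq ?_)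
      ((hT hb0 hb1).le_tsum i0 (fun j _ => (T_nonneg (hap j) hb0 hb1).le))
    rw [← Real.rpow_mul hx.le, one_div_mul_cancel hA.ne', Real.rpow_one]
    have : (1 - (n : ℝ) / (n + a i0)) = a i0 / (n + a i0) := by field_simp; ring
    rw [this]
    field_simp
  -- lower point
  obtain ⟨c, hc0, hcb, hc⟩ : ∃ c : ℝ, 0 < c ∧ c ≤ b ∧
      (∑' i, a i * c ^ a i / (1 - c ^ a i)) ≤ n := by
    set S := ∑' i, a i * b ^ a i / (1 - b ^ a i) with hS
    have hS0 : 0 < S := hn'.trans_le hb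
    have hz : 0 < (n : ℝ) / S := by positivity
    have hz1 : (n : ℝ) / S ≤ 1 := by rw [div_le_one hS0]; exact hb
    set p := ((n : ℝ) / S) ^ (1 / δ) with hp
    have hp0 : 0 < p := Real.rpow_pos_of_pos hz _
    have hp1 : p ≤ 1 := Real.rpow_le_one hz.le hz1 (by positivity)
    have hpd : p ^ δ = n / S := by
      rw [hp, ← Real.rpow_mul hz.le, one_div_mul_cancel hδ.ne', Real.rpow_one]
    have hpb0 : 0 < p * b := by positivity
    have hpb : p * b ≤ b := by nlinarith
    refine ⟨p * b, hpb0, hpb, ?_⟩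
    have : ∀ i, a i * (p * b) ^ a i / (1 - (p * b) ^ a i)
        ≤ p ^ δ * (a i * b ^ a i / (1 - b ^ a i)) := by
      intro i
      have h1 : (p * b) ^ a i ≤ b ^ a i := Real.rpow_le_rpow hpb0.le hpb (hap i).le
      have h2 : b ^ a i < 1 := Real.rpow_lt_one hb0.le hb1 (hap i)
      have h3 : p ^ a i ≤ p ^ δ := Real.rpow_le_rpow_of_exponent_ge hp0 hp1 (ha i)
      have h4 : 0 < b ^ a i := Real.rpow_pos_of_pos hb0 _
      have h5 : 0 < p ^ δ := Real.rpow_pos_of_pos hp0 _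
      have h6 := hap i
      have h7 : a i * (p * b) ^ a i ≤ p ^ δ * (a i * b ^ a i) := by
        rw [Real.mul_rpow hp0.le hb0.le]
        have := mul_le_mul_of_nonneg_right h3 (mul_pos h6 h4).le
        linarith
      rw [← mul_div_assoc]
      exact div_le_div₀ (by positivity) h7 (by linarith) (by linarith)
    calc _ ≤ ∑' i, p ^ δ * (a i * b ^ a i / (1 - b ^ a i)) :=
          (hT hpb0 (hpb.trans_lt hb1)).tsum_le_tsum this ((hT hb0 hb1).mul_left _)
      _ = p ^ δ * S := tsum_mul_left
      _ = n := by rw [hpd]; field_simp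
      _ ≤ n := le_rfl
  have hcont : ContinuousOn (fun q : ℝ => ∑' i, a i * q ^ a i / (1 - q ^ a i)) (Set.Icc c b) := by
    refine continuousOn_tsum (fun i => ?_) (hT hb0 hb1) (fun i x hx => ?_)
    · have hr : ContinuousOn (fun q : ℝ => q ^ a i) (Set.Icc c b) :=
        continuousOn_id.rpow_const (fun x hx => Or.inr (hap i).le)
      refine (continuousOn_const.mul hr).div (continuousOn_const.sub hr) (fun x hx => ?_)
      have : x ^ a i < 1 :=
        Real.rpow_lt_one (hc0.le.trans hx.1) (hx.2.trans_lt hb1) (hap i)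
      exact (sub_pos.2 this).ne'
    · have hx0 : 0 < x := hc0.trans_le hx.1
      rw [Real.norm_of_nonneg (T_nonneg (hap i) hx0 (hx.2.trans_lt hb1)).le]
      rcases hx.2.eq_or_lt with h | h
      · rw [h]
      · exact (T_mono (hap i) hx0 h hb1).le
  obtain ⟨q, hq, hqn⟩ := intermediate_value_Icc hcb hcont ⟨hc, hb⟩
  refine ⟨q, ⟨⟨hc0.trans_le hq.1, hq.2.trans_lt hb1⟩, hqn⟩, ?_⟩
  rintro p ⟨hp, hpn⟩
  have hq0 : 0 < q := hc0.trans_le hq.1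
  have hq1 : q < 1 := hq.2.trans_lt hb1
  simp only at hqn
  rcases lt_trichotomy p q with h | h | h
  · have := hmono p q hp.1 h hq1
    linarith
  · exact h
  · have := hmono q p hq0 h hp.2
    linarith

lemma abs_max (hδ : 0 < δ) (ha : ∀ i, δ ≤ a i)
    (hs : ∀ q : ℝ, 0 < q → q < 1 → Summable fun i => q ^ a i) (n : ℕ)
    (q : ℝ) (hq : q ∈ Set.Ioo (0 : ℝ) 1) (hqn : (∑' i, a i * q ^ a i / (1 - q ^ a i)) = n) :
    IsMaxOn (fun p : ℝ => p ^ n * ∏' i, (1 - p ^ a i)) (Set.Ioo (0 : ℝ) 1) q := by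
  have hap : ∀ i, 0 < a i := fun i => hδ.trans_le (ha i)
  have hm : ∀ p : ℝ, 0 < p → p < 1 → Multipliable fun i => 1 - p ^ a i := by
    intro p h0 h1
    simpa [sub_eq_add_neg] using Real.multipliable_one_add_of_summable (hs p h0 h1).neg
  rw [isMaxOn_iff]
  rintro p ⟨hp0, hp1⟩
  obtain ⟨hq0, hq1⟩ := hq
  have hsum := (T_summable a δ hδ ha hs hq0 hq1).hasSum
  rw [hqn] at hsum
  have hprod := (hm q hq0 hq1).hasProd.mul (hsum.mul_right (Real.log (q / p))).rexp
  have hle : ∏' i, (1 - p ^ a i) ≤ (∏' i, (1 - q ^ a i)) * Real.exp (n * Real.log (q / p)) := by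
    refine le_of_tendsto_of_tendsto (hm p hp0 hp1).hasProd hprod (Filter.Eventually.of_forall ?_)
    intro s
    refine Finset.prod_le_prod (fun i _ => ?_) (fun i _ => T_tangent (hap i) hp0 hp1 hq0 hq1)
    exact (sub_pos.2 (Real.rpow_lt_one hp0.le hp1 (hap i))).le
  have he : Real.exp (n * Real.log (q / p)) = q ^ n / p ^ n := by
    rw [Real.exp_nat_mul, Real.exp_log (div_pos hq0 hp0), div_pow]
  rw [he] at hle
  calc p ^ n * ∏' i, (1 - p ^ a i) ≤ p ^ n * ((∏' i, (1 - q ^ a i)) * (q ^ n / p ^ n)) :=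
        mul_le_mul_of_nonneg_left hle (by positivity)
    _ = q ^ n * ∏' i, (1 - q ^ a i) := by field_simp

lemma geom_pi_summable (r : ℕ) {x : ℝ} (h0 : 0 ≤ x) (h1 : x < 1) :
    Summable fun k : Fin r → ℕ => ∏ i, x ^ k i := by
  induction r with
  | zero => exact Summable.of_finite
  | succ r ih =>
    rw [← (Fin.consEquiv (fun _ : Fin (r + 1) => ℕ)).summable_iff]
    have := (summable_geometric_of_lt_one h0 h1).mul_of_nonneg ih (fun i => by positivity)
      (fun i => Finset.prod_nonneg fun _ _ => by positivity)
    refine this.congr (fun k => ?_)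
    simp [Fin.prod_univ_succ, Fin.consEquiv]

lemma crconst_pos (r : ℕ) : 0 < crconst r :=
  Finset.prod_pos fun i _ => Nat.factorial_pos _

lemma sum_le_hpoly (r : ℕ) (hr : 1 ≤ r) (k : {k : Fin r → ℕ // ∀ i, 0 < k i}) :
    (∑ i, (k.1 i : ℝ)) ≤ hpoly r (fun i => (k.1 i : ℝ)) := by
  obtain ⟨m, rfl⟩ : ∃ m, r = m + 1 := ⟨r - 1, by omega⟩
  unfold hpoly
  have hmem : ((0 : Fin (m + 1)), Fin.last m) ∈
      Finset.univ.filter (fun p : Fin (m + 1) × Fin (m + 1) => p.1 ≤ p.2) := by simp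
  rw [← Finset.mul_prod_erase _ _ hmem]
  have hI : Finset.Icc (0 : Fin (m + 1)) (Fin.last m) = Finset.univ := by
    ext i; simp [Fin.le_last]
  simp only [hI]
  refine le_mul_of_one_le_right (Finset.sum_nonneg fun _ _ => by positivity) ?_
  rw [← Finset.prod_const_one (ι := Fin (m + 1) × Fin (m + 1)) (M := ℝ)]
  refine Finset.prod_le_prod (fun _ _ => zero_le_one) (fun p hp => ?_)
  have hp' : p.1 ≤ p.2 := by
    have := Finset.mem_of_mem_erase hp
    simpa using this
  have h1 : (1 : ℝ) ≤ k.1 p.1 := by exact_mod_cast k.2 p.1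
  exact h1.trans (Finset.single_le_sum (f := fun i => (k.1 i : ℝ)) (fun _ _ => by positivity)
    (Finset.left_mem_Icc.2 hp'))

lemma adim_ge (r : ℕ) (hr : 1 ≤ r) (k : {k : Fin r → ℕ // ∀ i, 0 < k i}) :
    (1 / (crconst r : ℝ)) * (∑ i, (k.1 i : ℝ)) ≤ adim r k := by
  have hc : (0 : ℝ) < crconst r := by exact_mod_cast crconst_pos r
  unfold adim apoly
  rw [one_div_mul_eq_div]
  exact div_le_div_of_nonneg_right (sum_le_hpoly r hr k) hc.le

lemma adim_lower (r : ℕ) (hr : 1 ≤ r) (k : {k : Fin r → ℕ // ∀ i, 0 < k i}) :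
    1 / (crconst r : ℝ) ≤ adim r k := by
  have hc : (0 : ℝ) < crconst r := by exact_mod_cast crconst_pos r
  refine le_trans (le_mul_of_one_le_right (by positivity) ?_) (adim_ge r hr k)
  have h1 : (1 : ℝ) ≤ k.1 ⟨0, hr⟩ := by exact_mod_cast k.2 ⟨0, hr⟩
  exact h1.trans (Finset.single_le_sum (f := fun i => (k.1 i : ℝ)) (fun _ _ => by positivity)
    (Finset.mem_univ _))

lemma adim_summable (r : ℕ) (hr : 1 ≤ r) (q : ℝ) (h0 : 0 < q) (h1 : q < 1) :
    Summable fun k : {k : Fin r → ℕ // ∀ i, 0 < k i} => q ^ adim r k := by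
  have hc : (0 : ℝ) < crconst r := by exact_mod_cast crconst_pos r
  have hx0 : 0 < q ^ (1 / (crconst r : ℝ)) := Real.rpow_pos_of_pos h0 _
  have hx1 : q ^ (1 / (crconst r : ℝ)) < 1 := Real.rpow_lt_one h0.le h1 (by positivity)
  refine Summable.of_nonneg_of_le (fun k => (Real.rpow_pos_of_pos h0 _).le) (fun k => ?_)
    ((geom_pi_summable r hx0.le hx1).subtype {k : Fin r → ℕ | ∀ i, 0 < k i})
  refine (Real.rpow_le_rpow_of_exponent_ge h0 h1.le (adim_ge r hr k)).trans (le_of_eq ?_)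
  simp only [Function.comp]
  rw [Real.rpow_mul h0.le, Finset.prod_pow_eq_pow_sum, ← Real.rpow_natCast]
  push_cast
  rfl

end helpers17

/-- Proposition 4.2: there is a unique `q_n ∈ (0,1)` with
`∑_k a_r(k) q^{a_r(k)}/(1-q^{a_r(k)}) = n`, and it maximizes
`q ↦ q^n ∏_k (1 - q^{a_r(k)})` over `(0,1)`. -/
theorem stmt17 (r : ℕ) (hr : 1 ≤ r) (n : ℕ) (hn : 1 ≤ n) :
    (∃! q : ℝ, q ∈ Set.Ioo (0 : ℝ) 1 ∧
      (∑' k : {k : Fin r → ℕ // ∀ i, 0 < k i},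
        adim r k * q ^ adim r k / (1 - q ^ adim r k)) = n) ∧
    ∀ q : ℝ, q ∈ Set.Ioo (0 : ℝ) 1 →
      (∑' k : {k : Fin r → ℕ // ∀ i, 0 < k i},
        adim r k * q ^ adim r k / (1 - q ^ adim r k)) = n →
      IsMaxOn (fun p : ℝ =>
        p ^ n * ∏' k : {k : Fin r → ℕ // ∀ i, 0 < k i}, (1 - p ^ adim r k))
        (Set.Ioo (0 : ℝ) 1) q := by
  have hc : (0 : ℝ) < crconst r := by exact_mod_cast crconst_pos r
  have hδ : 0 < 1 / (crconst r : ℝ) := by positivity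
  haveI : Nonempty {k : Fin r → ℕ // ∀ i, 0 < k i} := ⟨⟨fun _ => 1, fun _ => one_pos⟩⟩
  exact ⟨abs_exists (adim r) _ hδ (adim_lower r hr) (adim_summable r hr) n hn,
    fun q hq hqn => abs_max (adim r) _ hδ (adim_lower r hr) (adim_summable r hr) n q hq hqn⟩
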